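/- Let k be a field of characteristic 0, S = k[x,y,z,u,v,t] acting by contraction on Q_S = k[X,Y,Z,U,V,T], F = T·(XU^2 + YUV + ZV^2) + X^2·U·V + X·Y·V^2 ∈ Q_S, and C = S/Ann_S(F), a graded Artinian Gorenstein algebra with Hilbert function (1,6,10,6,1). Then C is strong Lefschetz: there exists a linear form ℓ ∈ C_1 such that for all i, k ≥ 0 the map ×ℓ^k : C_i → C_{i+k} has maximal rank min(dim_k C_i, dim_k C_{i+k}); equivalently the generic linear Jordan type of C is (5,3,3,3,3,3,1,1,1,1), the conjugate of its Hilbert function. (Thus C is a strong Lefschetz free extension of k[t]/(t^2) whose fiber B = k[x,y,z,u,v]/Ann(XU^2+YUV+ZV^2) is not strong Lefschetz, answering Watanabe's question in the standard graded case in the negative.) -/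

import Mathlib

set_option synthInstance.maxHeartbeats 1000000
set_option maxHeartbeats 1000000

open Classical in
/-- Contraction action of `k[x_1,…]` on `k[X_1,…]` (the two polynomial rings being
identified): determined on monomials by `x^a ∘ X^b = X^{b-a}` if `a ≤ b` componentwise,
and `0` otherwise. -/
noncomputable def contract {k : Type*} [CommRing k] {σ : Type*}
    (f F : MvPolynomial σ k) : MvPolynomial σ k :=
  ∑ b ∈ F.support, ∑ a ∈ f.support,
    if a ≤ b then
      MvPolynomial.monomial (b - a) (MvPolynomial.coeff a f * MvPolynomial.coeff b F)
    else 0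

/-- The annihilator `Ann F = {f : f ∘ F = 0}` of `F` under contraction, as an ideal. -/
noncomputable def annIdeal {k : Type*} [CommRing k] {σ : Type*}
    (F : MvPolynomial σ k) : Ideal (MvPolynomial σ k) :=
  Ideal.span {f | contract f F = 0}

/-- The Perazzo cubic `F_B = XU² + YUV + ZV²` in `k[X,Y,Z,U,V]`
(variables `x,y,z,u,v = X 0,…,X 4`). -/
noncomputable def perazzoCubic (k : Type*) [Field k] : MvPolynomial (Fin 5) k :=
  MvPolynomial.X 0 * MvPolynomial.X 3 ^ 2 +
    MvPolynomial.X 1 * MvPolynomial.X 3 * MvPolynomial.X 4 +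
    MvPolynomial.X 2 * MvPolynomial.X 4 ^ 2

/-- The quartic `G = X²UV + XYV²` in `k[X,Y,Z,U,V]`. -/
noncomputable def perazzoG (k : Type*) [Field k] : MvPolynomial (Fin 5) k :=
  MvPolynomial.X 0 ^ 2 * MvPolynomial.X 3 * MvPolynomial.X 4 +
    MvPolynomial.X 0 * MvPolynomial.X 1 * MvPolynomial.X 4 ^ 2

/-- `F = T·F_B + G ∈ k[X,Y,Z,U,V,T]` (with `T = X 5` the last variable). -/
noncomputable def perazzoF (k : Type*) [Field k] : MvPolynomial (Fin 6) k :=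
  MvPolynomial.X (Fin.last 5) * MvPolynomial.rename Fin.castSucc (perazzoCubic k) +
    MvPolynomial.rename Fin.castSucc (perazzoG k)

/-- The induced grading on the quotient `C = S/Ann_S(F)`. -/
noncomputable def perazzoCGrade (k : Type*) [Field k] (d : ℕ) :
    Submodule k (MvPolynomial (Fin 6) k ⧸ annIdeal (perazzoF k)) :=
  (MvPolynomial.homogeneousSubmodule (Fin 6) k d).map
    (Ideal.Quotient.mkₐ k (annIdeal (perazzoF k))).toLinearMap


open MvPolynomial

/-- pairing -/
noncomputable def pzPair {k : Type*} [Field k] (F f : MvPolynomial (Fin 6) k) : k :=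
  ∑ b ∈ F.support, coeff b F * coeff b f

lemma pzPair_add {k : Type*} [Field k] (F G f : MvPolynomial (Fin 6) k) :
    pzPair (F + G) f = pzPair F f + pzPair G f := by
  classical
  have key : ∀ (A : MvPolynomial (Fin 6) k) (T : Finset _), A.support ⊆ T →
      pzPair A f = ∑ b ∈ T, coeff b A * coeff b f := by
    intro A T h
    refine Finset.sum_subset h ?_
    intro b _ hb
    rw [notMem_support_iff.mp hb, zero_mul]
  rw [key (F + G) (F.support ∪ G.support) support_add,
    key F (F.support ∪ G.support) Finset.subset_union_left,
    key G (F.support ∪ G.support) Finset.subset_union_right, ← Finset.sum_add_distrib]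
  simp [add_mul]

lemma pzPair_monomial {k : Type*} [Field k] (m : Fin 6 →₀ ℕ) (f : MvPolynomial (Fin 6) k) :
    pzPair (monomial m 1) f = coeff m f := by
  classical
  simp [pzPair, support_monomial]

lemma coeff_contract {k : Type*} [Field k] (F f : MvPolynomial (Fin 6) k) (c : Fin 6 →₀ ℕ) :
    coeff c (contract f F) = pzPair F (f * monomial c 1) := by
  classical
  unfold contract pzPair
  rw [coeff_sum]
  refine Finset.sum_congr rfl fun b _ => ?_
  rw [coeff_sum, coeff_mul_monomial']
  split_ifs with h
  · rw [Finset.sum_eq_single (b - c)]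
    · rw [if_pos tsub_le_self, coeff_monomial, if_pos (tsub_tsub_cancel_of_le h)]; ring
    · intro a _ ha
      split_ifs with h2
      · rw [coeff_monomial, if_neg]
        rintro rfl
        exact ha (tsub_tsub_cancel_of_le h2).symm
      · simp
    · intro h3
      rw [notMem_support_iff.mp h3]; simp
  · rw [mul_zero]
    refine Finset.sum_eq_zero fun a _ => ?_
    split_ifs with h2
    · rw [coeff_monomial, if_neg]
      rintro rfl
      exact h tsub_le_self
    · simp

/-- exponent -/
noncomputable def pzM (i j a b : Fin 6) : Fin 6 →₀ ℕ :=
  Finsupp.single i 1 + Finsupp.single j 1 + Finsupp.single a 1 + Finsupp.single b 1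

lemma pzM_monomial {k : Type*} [Field k] (i j a b : Fin 6) :
    (monomial (pzM i j a b) 1 : MvPolynomial (Fin 6) k) = X i * X j * X a * X b := by
  simp [pzM, X, monomial_mul]

/-- functional -/
noncomputable def pzL (k : Type*) [Field k] : MvPolynomial (Fin 6) k →ₗ[k] k :=
  lcoeff k (pzM 5 0 3 3) + lcoeff k (pzM 5 1 3 4) + lcoeff k (pzM 5 2 4 4)
    + lcoeff k (pzM 0 0 3 4) + lcoeff k (pzM 0 1 4 4)

lemma pzF_eq {k : Type*} [Field k] : perazzoF k =
    monomial (pzM 5 0 3 3) 1 + monomial (pzM 5 1 3 4) 1 + monomial (pzM 5 2 4 4) 1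
    + monomial (pzM 0 0 3 4) 1 + monomial (pzM 0 1 4 4) 1 := by
  simp only [pzM_monomial]
  simp only [perazzoF, perazzoCubic, perazzoG, map_add, map_mul, map_pow, rename_X]
  rw [show (Fin.last 5 : Fin 6) = 5 from rfl, show Fin.castSucc (0 : Fin 5) = 0 from rfl,
    show Fin.castSucc (1 : Fin 5) = 1 from rfl, show Fin.castSucc (2 : Fin 5) = 2 from rfl,
    show Fin.castSucc (3 : Fin 5) = 3 from rfl, show Fin.castSucc (4 : Fin 5) = 4 from rfl]
  ring

lemma pzPair_F {k : Type*} [Field k] (f : MvPolynomial (Fin 6) k) :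
    pzPair (perazzoF k) f = pzL k f := by
  rw [pzF_eq]
  simp only [pzPair_add, pzPair_monomial]
  rfl

lemma mem_ann {k : Type*} [Field k] (f : MvPolynomial (Fin 6) k) :
    f ∈ annIdeal (perazzoF k) ↔ ∀ g, pzL k (f * g) = 0 := by
  have h1 : ∀ f : MvPolynomial (Fin 6) k,
      contract f (perazzoF k) = 0 ↔ ∀ g, pzL k (f * g) = 0 := by
    intro f
    constructor
    · intro h g
      induction g using MvPolynomial.induction_on' with
      | monomial u a =>
        have := coeff_contract (perazzoF k) f u
        rw [h, pzPair_F, coeff_zero] at this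
        rw [show (monomial u a : MvPolynomial (Fin 6) k) = a • monomial u 1 by
          simp [smul_monomial], mul_smul_comm, map_smul, ← this, smul_zero]
      | add p q hp hq => rw [mul_add, map_add, hp, hq, add_zero]
    · intro h
      ext c
      rw [coeff_contract, pzPair_F, h, coeff_zero]
  constructor
  · intro hf
    unfold annIdeal at hf
    induction hf using Submodule.span_induction with
    | mem x hx => exact (h1 x).1 hx
    | zero => intro g; simp
    | add x y _ _ hx hy => intro g; rw [add_mul, map_add, hx, hy, add_zero]
    | smul a x _ hx => intro g; rw [smul_eq_mul, show a * x * g = x * (a * g) by ring, hx]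
  · intro h
    exact Ideal.subset_span ((h1 f).2 h)

lemma pzM_degree (i j a b : Fin 6) : (pzM i j a b).degree = 4 := by
  simp [pzM, map_add, Finsupp.degree_single]

lemma pzL_deg {k : Type*} [Field k] {f : MvPolynomial (Fin 6) k} {d : ℕ}
    (hf : f.IsHomogeneous d) (hd : d ≠ 4) : pzL k f = 0 := by
  have h : ∀ i j a b, coeff (pzM i j a b) f = 0 := fun i j a b =>
    hf.coeff_eq_zero (by rw [pzM_degree]; exact hd.symm)
  simp [pzL, lcoeff_apply, h]

/-- weights -/
def pzW (i j a b : Fin 6) : ℕ :=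
  let c : Fin 6 → Fin 6 → Fin 6 → Fin 6 → ℕ := fun p q r s =>
    if ([i, j, a, b] : List (Fin 6)).Perm [p, q, r, s] then 1 else 0
  c 5 0 3 3 + c 5 1 3 4 + c 5 2 4 4 + c 0 0 3 4 + c 0 1 4 4

lemma pzM_eq_iff (i j a b p q r s : Fin 6) :
    pzM i j a b = pzM p q r s ↔ ([i, j, a, b] : List (Fin 6)).Perm [p, q, r, s] := by
  have h : ∀ i j a b : Fin 6,
      pzM i j a b = Multiset.toFinsupp (([i, j, a, b] : List (Fin 6)) : Multiset (Fin 6)) := by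
    intro i j a b
    have : (([i, j, a, b] : List (Fin 6)) : Multiset (Fin 6)) = {i} + {j} + {a} + {b} := rfl
    rw [this]
    simp only [map_add, Multiset.toFinsupp_singleton]
    rfl
  rw [h, h, EmbeddingLike.apply_eq_iff_eq, Multiset.coe_eq_coe]

lemma pzL_XXXX {k : Type*} [Field k] (i j a b : Fin 6) :
    pzL k (X i * X j * X a * X b) = (pzW i j a b : k) := by
  classical
  rw [← pzM_monomial]
  simp only [pzL, LinearMap.add_apply, lcoeff_apply, coeff_monomial, pzM_eq_iff, pzW]
  push_cast
  rfl

lemma pz_finrank_iSup {k V : Type*} [Field k] [AddCommGroup V] [Module k V] [Module.Finite k V]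
    {n : ℕ} (U : Fin n → Submodule k V) (h : iSupIndep U) :
    Module.finrank k (⨆ i, U i : Submodule k V) = ∑ i, Module.finrank k (U i) := by
  classical
  rw [← Module.finrank_directSum]
  rw [Submodule.iSup_eq_range_dfinsupp_lsum]
  exact LinearMap.finrank_range_of_inj h.dfinsupp_lsum_injective

lemma pz_finrank_map_congr {k V W W' : Type*} [Field k] [AddCommGroup V] [Module k V]
    [AddCommGroup W] [Module k W] [AddCommGroup W'] [Module k W']
    (A : V →ₗ[k] W) (B : V →ₗ[k] W') (p : Submodule k V)
    (h : ∀ x ∈ p, A x = 0 ↔ B x = 0) :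
    Module.finrank k (p.map A) = Module.finrank k (p.map B) := by
  have hk : LinearMap.ker (A.domRestrict p) = LinearMap.ker (B.domRestrict p) := by
    ext ⟨x, hx⟩
    simpa using h x hx
  rw [← LinearMap.range_domRestrict, ← LinearMap.range_domRestrict]
  exact (((A.domRestrict p).quotKerEquivRange.symm.trans
    (Submodule.quotEquivOfEq _ _ hk)).trans (B.domRestrict p).quotKerEquivRange).finrank_eq

lemma pz_finrank_map_inj {k V W : Type*} [Field k] [AddCommGroup V] [Module k V]
    [AddCommGroup W] [Module k W] 
    (A : V →ₗ[k] W) (p : Submodule k V) (h : ∀ x ∈ p, A x = 0 → x = 0) :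
    Module.finrank k (p.map A) = Module.finrank k p := by
  have := pz_finrank_map_congr A LinearMap.id p (fun x hx => ⟨h x hx, fun h => by
    have : x = 0 := h
    rw [this, map_zero]⟩)
  rwa [Submodule.map_id] at this

/-- quotient -/
abbrev PzC (k : Type*) [Field k] := MvPolynomial (Fin 6) k ⧸ annIdeal (perazzoF k)

/-- quotient map -/
noncomputable abbrev pzmk (k : Type*) [Field k] : MvPolynomial (Fin 6) k →ₐ[k] PzC k :=
  Ideal.Quotient.mkₐ k (annIdeal (perazzoF k))

lemma pzmk_zero {k : Type*} [Field k] (f : MvPolynomial (Fin 6) k) :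
    pzmk k f = 0 ↔ ∀ g, pzL k (f * g) = 0 := by
  rw [← mem_ann]
  exact Ideal.Quotient.eq_zero_iff_mem

lemma pzmk_zero_of_deg {k : Type*} [Field k] {f : MvPolynomial (Fin 6) k} {d : ℕ}
    (hf : f ∈ homogeneousSubmodule (Fin 6) k d)
    (h : ∀ e, d + e = 4 → ∀ g ∈ homogeneousSubmodule (Fin 6) k e, pzL k (f * g) = 0) :
    pzmk k f = 0 := by
  rw [pzmk_zero]
  intro g
  induction g using MvPolynomial.induction_on' with
  | monomial u a =>
    have hu : (monomial u a : MvPolynomial (Fin 6) k).IsHomogeneous u.degree :=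
      isHomogeneous_monomial a rfl
    by_cases hd : d + u.degree = 4
    · exact h _ hd _ hu
    · exact pzL_deg (IsHomogeneous.mul hf hu) hd
  | add p q hp hq => rw [mul_add, map_add, hp, hq, add_zero]

lemma pz_step {k W : Type*} [Field k] [AddCommGroup W] [Module k W]
    (φ : MvPolynomial (Fin 6) k →ₗ[k] W) (e : ℕ)
    (h : ∀ i, ∀ g ∈ homogeneousSubmodule (Fin 6) k e, φ (X i * g) = 0) :
    ∀ g ∈ homogeneousSubmodule (Fin 6) k (e + 1), φ g = 0 := by
  intro g hg
  rw [← homogeneousSubmodule_one_pow, pow_succ', homogeneousSubmodule_one_pow] at hg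
  refine Submodule.mul_induction_on hg ?_ ?_
  · intro m hm n hn
    rw [homogeneousSubmodule_one_eq_span_X] at hm
    induction hm using Submodule.span_induction with
    | mem x hx => obtain ⟨i, rfl⟩ := hx; exact h i n hn
    | zero => simp
    | add x y _ _ hx hy => rw [add_mul, map_add, hx, hy, add_zero]
    | smul a x _ hx => rw [smul_mul_assoc, map_smul, hx, smul_zero]
  · intro x y hx hy
    rw [map_add, hx, hy, add_zero]

lemma pz_deg0 {k : Type*} [Field k] (g : MvPolynomial (Fin 6) k)
    (hg : g ∈ homogeneousSubmodule (Fin 6) k 0) : ∃ r : k, g = r • 1 := by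
  rw [homogeneousSubmodule_zero, Submodule.mem_one] at hg
  obtain ⟨r, rfl⟩ := hg
  exact ⟨r, by rw [Algebra.algebraMap_eq_smul_one]⟩

lemma pz_step1 {k W : Type*} [Field k] [AddCommGroup W] [Module k W]
    (φ : MvPolynomial (Fin 6) k →ₗ[k] W)
    (h : ∀ i, φ (X i) = 0) :
    ∀ g ∈ homogeneousSubmodule (Fin 6) k 1, φ g = 0 := by
  refine pz_step φ 0 fun i g hg => ?_
  obtain ⟨r, rfl⟩ := pz_deg0 g hg
  rw [mul_smul_comm, mul_one, map_smul, h, smul_zero]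

lemma pz_step2 {k W : Type*} [Field k] [AddCommGroup W] [Module k W]
    (φ : MvPolynomial (Fin 6) k →ₗ[k] W)
    (h : ∀ i j, φ (X i * X j) = 0) :
    ∀ g ∈ homogeneousSubmodule (Fin 6) k 2, φ g = 0 := by
  refine pz_step φ 1 fun i => ?_
  exact pz_step1 (φ ∘ₗ LinearMap.mulLeft k (X i)) (fun j => h i j)

lemma pz_deg1 {k : Type*} [Field k] (g : MvPolynomial (Fin 6) k)
    (hg : g ∈ homogeneousSubmodule (Fin 6) k 1) : ∃ c : Fin 6 → k, g = ∑ i, c i • X i := by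
  rw [homogeneousSubmodule_one_eq_span_X, Submodule.mem_span_range_iff_exists_fun] at hg
  obtain ⟨c, rfl⟩ := hg
  exact ⟨c, rfl⟩

lemma pz_dim {k ι : Type*} [Field k] [Fintype ι] [DecidableEq ι] (d : ℕ)
    (g e : ι → MvPolynomial (Fin 6) k)
    (he : ∀ i, e i ∈ homogeneousSubmodule (Fin 6) k d)
    (hd : ∀ i j, pzL k (e i * g j) = if i = j then 1 else 0)
    (hinj : ∀ f ∈ homogeneousSubmodule (Fin 6) k d, (∀ j, pzL k (f * g j) = 0) → pzmk k f = 0) :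
    Module.finrank k (perazzoCGrade k d) = Fintype.card ι := by
  set B : MvPolynomial (Fin 6) k →ₗ[k] (ι → k) :=
    LinearMap.pi fun j => pzL k ∘ₗ LinearMap.mulRight k (g j) with hB
  have hBa : ∀ f j, B f j = pzL k (f * g j) := fun f j => rfl
  have h1 : (homogeneousSubmodule (Fin 6) k d).map B = ⊤ := by
    rw [eq_top_iff]
    intro v _
    refine ⟨∑ i, v i • e i, Submodule.sum_mem _ fun i _ => Submodule.smul_mem _ _ (he i), ?_⟩
    ext j
    rw [hBa, Finset.sum_mul, map_sum]
    simp [hd]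
  unfold perazzoCGrade
  rw [pz_finrank_map_congr _ B, h1, finrank_top, Module.finrank_fintype_fun_eq_card]
  intro f hf
  constructor
  · intro h
    ext j
    exact (pzmk_zero f).1 h (g j)
  · intro h
    refine hinj f hf fun j => ?_
    rw [← hBa, h]; rfl

/-- cubic table -/
def pzT : Fin 6 → Fin 6 × Fin 6 × Fin 6 :=
  ![(5, 3, 3), (5, 3, 4), (5, 4, 4), (5, 0, 3), (0, 1, 4), (0, 3, 3)]

/-- quadric table -/
def pzG : Fin 10 → Fin 6 × Fin 6 :=
  ![(5, 0), (3, 3), (5, 3), (0, 3), (5, 4), (1, 3), (5, 1), (3, 4), (5, 2), (4, 4)]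

/-- dual quadric table -/
def pzG' : Fin 10 → Fin 6 × Fin 6 :=
  ![(3, 3), (5, 0), (0, 3), (5, 3), (1, 3), (5, 4), (3, 4), (5, 1), (4, 4), (5, 2)]

lemma pzW_T : ∀ i j, pzW i (pzT j).1 (pzT j).2.1 (pzT j).2.2 = if i = j then 1 else 0 := by
  decide +kernel
lemma pzW_T' : ∀ i j, pzW (pzT i).1 (pzT i).2.1 (pzT i).2.2 j = if i = j then 1 else 0 := by
  decide +kernel
lemma pzW_G : ∀ i j, pzW (pzG i).1 (pzG i).2 (pzG' j).1 (pzG' j).2 = if i = j then 1 else 0 := by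
  decide +kernel
lemma pzW_cls : ∀ i j, (∀ a b, pzW a b i j = 0) ∨
    ∃ n, ∀ a b, pzW a b i j = pzW a b (pzG' n).1 (pzG' n).2 := by
  decide +kernel

lemma pz_X_mem {k : Type*} [Field k] (i : Fin 6) :
    (X i : MvPolynomial (Fin 6) k) ∈ homogeneousSubmodule (Fin 6) k 1 := isHomogeneous_X k i

lemma pz_XX_mem {k : Type*} [Field k] (i j : Fin 6) :
    (X i * X j : MvPolynomial (Fin 6) k) ∈ homogeneousSubmodule (Fin 6) k 2 :=
  (isHomogeneous_X k i).mul (isHomogeneous_X k j)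

lemma pz_XXX_mem {k : Type*} [Field k] (i j a : Fin 6) :
    (X i * X j * X a : MvPolynomial (Fin 6) k) ∈ homogeneousSubmodule (Fin 6) k 3 :=
  ((isHomogeneous_X k i).mul (isHomogeneous_X k j)).mul (isHomogeneous_X k a)

lemma pz_XXXX_mem {k : Type*} [Field k] (i j a b : Fin 6) :
    (X i * X j * X a * X b : MvPolynomial (Fin 6) k) ∈ homogeneousSubmodule (Fin 6) k 4 :=
  (((isHomogeneous_X k i).mul (isHomogeneous_X k j)).mul (isHomogeneous_X k a)).mul
    (isHomogeneous_X k b)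

lemma pz_dim0 (k : Type*) [Field k] : Module.finrank k (perazzoCGrade k 0) = 1 := by
  have hw : pzL k (X 5 * X 0 * X 3 * X 3) = 1 := by
    rw [pzL_XXXX, show pzW 5 0 3 3 = 1 by decide +kernel, Nat.cast_one]
  refine (pz_dim (ι := Fin 1) 0 (fun _ => X 5 * X 0 * X 3 * X 3) (fun _ => 1)
    (fun _ => isHomogeneous_one _ _) ?_ ?_).trans (Fintype.card_fin 1)
  · intro i j
    rw [one_mul, hw, if_pos (Subsingleton.elim _ _)]
  · intro f hf h
    obtain ⟨r, rfl⟩ := pz_deg0 f hf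
    have := h 0
    rw [smul_mul_assoc, one_mul, map_smul, hw, smul_eq_mul, mul_one] at this
    rw [this, zero_smul, map_zero]

lemma pz_dim1 (k : Type*) [Field k] : Module.finrank k (perazzoCGrade k 1) = 6 := by
  have hw : ∀ i j, pzL k (X i * (X (pzT j).1 * X (pzT j).2.1 * X (pzT j).2.2)) =
      if i = j then 1 else 0 := by
    intro i j
    rw [← mul_assoc, ← mul_assoc, pzL_XXXX, pzW_T]; push_cast; rfl
  refine (pz_dim (ι := Fin 6) 1 (fun j => X (pzT j).1 * X (pzT j).2.1 * X (pzT j).2.2) (fun i => X i)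
    pz_X_mem hw ?_).trans (Fintype.card_fin 6)
  intro f hf h
  obtain ⟨c, rfl⟩ := pz_deg1 f hf
  have hc : ∀ j, c j = 0 := by
    intro j
    have := h j
    simpa [Finset.sum_mul, hw] using this
  simp [hc]

lemma pz_dim2 (k : Type*) [Field k] : Module.finrank k (perazzoCGrade k 2) = 10 := by
  refine (pz_dim (ι := Fin 10) 2 (fun j => X (pzG' j).1 * X (pzG' j).2)
    (fun j => X (pzG j).1 * X (pzG j).2) (fun i => pz_XX_mem _ _) ?_ ?_).trans (Fintype.card_fin 10)
  · intro i j
    rw [← mul_assoc, pzL_XXXX, pzW_G]; push_cast; rfl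
  · intro f hf h
    refine pzmk_zero_of_deg hf fun e he => ?_
    obtain rfl : e = 2 := by omega
    refine pz_step2 (pzL k ∘ₗ LinearMap.mulLeft k f) fun i j => ?_
    change pzL k (f * (X i * X j)) = 0
    rcases pzW_cls i j with hc | ⟨n, hc⟩
    · refine pz_step2 (pzL k ∘ₗ LinearMap.mulRight k (X i * X j)) (fun a b => ?_) f hf
      change pzL k (X a * X b * (X i * X j)) = 0
      rw [← mul_assoc, pzL_XXXX, hc, Nat.cast_zero]
    · rw [← h n, ← sub_eq_zero]
      refine pz_step2 (pzL k ∘ₗ LinearMap.mulRight k (X i * X j) -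
        pzL k ∘ₗ LinearMap.mulRight k (X (pzG' n).1 * X (pzG' n).2)) (fun a b => ?_) f hf
      change pzL k (X a * X b * (X i * X j)) -
        pzL k (X a * X b * (X (pzG' n).1 * X (pzG' n).2)) = 0
      rw [← mul_assoc, ← mul_assoc, pzL_XXXX, pzL_XXXX, hc, sub_self]

lemma pz_dim3 (k : Type*) [Field k] : Module.finrank k (perazzoCGrade k 3) = 6 := by
  refine (pz_dim (ι := Fin 6) 3 (fun i => X i)
    (fun j => X (pzT j).1 * X (pzT j).2.1 * X (pzT j).2.2)
    (fun i => pz_XXX_mem _ _ _) ?_ ?_).trans (Fintype.card_fin 6)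
  · intro i j
    rw [pzL_XXXX, pzW_T']; push_cast; rfl
  · intro f hf h
    refine pzmk_zero_of_deg hf fun e he => ?_
    obtain rfl : e = 1 := by omega
    exact pz_step1 (pzL k ∘ₗ LinearMap.mulLeft k f) h

lemma pz_dim4 (k : Type*) [Field k] : Module.finrank k (perazzoCGrade k 4) = 1 := by
  refine (pz_dim (ι := Fin 1) 4 (fun i => 1)
    (fun j => X 5 * X 0 * X 3 * X 3)
    (fun i => pz_XXXX_mem _ _ _ _) ?_ ?_).trans (Fintype.card_fin 1)
  · intro i j
    rw [mul_one, pzL_XXXX, show pzW 5 0 3 3 = 1 by decide +kernel, Nat.cast_one,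
      if_pos (Subsingleton.elim _ _)]
  · intro f hf h
    refine pzmk_zero_of_deg hf fun e he g hg => ?_
    obtain rfl : e = 0 := by omega
    obtain ⟨r, rfl⟩ := pz_deg0 g hg
    rw [mul_smul_comm, map_smul, h 0, smul_zero]

lemma pz_bot (k : Type*) [Field k] (d : ℕ) (hd : 4 < d) : perazzoCGrade k d = ⊥ := by
  rw [eq_bot_iff]
  rintro _ ⟨f, hf, rfl⟩
  exact pzmk_zero_of_deg hf fun e he => by omega

lemma pz_fin (k : Type*) [Field k] (d : ℕ) : Module.Finite k (perazzoCGrade k d) :=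
  Module.Finite.iff_fg.2 ((homogeneousSubmodule_fg (σ := Fin 6) (R := k) d).map _)

lemma pz_indep (k : Type*) [Field k] : iSupIndep (perazzoCGrade k) := by
  classical
  rw [iSupIndep_iff_finsetSum_eq_zero_imp_eq_zero]
  intro s v hv hs d hd
  have : ∀ d, ∃ f ∈ homogeneousSubmodule (Fin 6) k d, d ∈ s → pzmk k f = v d := by
    intro d
    by_cases h : d ∈ s
    · obtain ⟨f, hf, h2⟩ := hv d h
      exact ⟨f, hf, fun _ => h2⟩
    · exact ⟨0, Submodule.zero_mem _, fun h' => absurd h' h⟩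
  choose f hf hfv using this
  rw [← hfv d hd]
  refine pzmk_zero_of_deg (hf d) fun e he g hg => ?_
  have h0 : pzmk k (∑ d ∈ s, f d) = 0 := by
    rw [map_sum, ← hs]
    exact Finset.sum_congr rfl fun d hd => hfv d hd
  have h1 := (pzmk_zero _).1 h0 g
  rw [Finset.sum_mul, map_sum, Finset.sum_eq_single d] at h1
  · exact h1
  · intro b _ hb
    exact pzL_deg (IsHomogeneous.mul (hf b) hg) (by omega)
  · exact fun h => absurd hd h

lemma pz_top (k : Type*) [Field k] : (⨆ i : Fin 5, perazzoCGrade k i) = ⊤ := by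
  rw [eq_top_iff]
  intro c _
  obtain ⟨f, rfl⟩ := Ideal.Quotient.mkₐ_surjective k _ c
  rw [← sum_homogeneousComponent f, map_sum]
  refine Submodule.sum_mem _ fun d _ => ?_
  have h : pzmk k (homogeneousComponent d f) ∈ perazzoCGrade k d :=
    ⟨_, homogeneousComponent_mem _ _, rfl⟩
  by_cases hd : 4 < d
  · rw [pz_bot k d hd] at h
    have h' : pzmk k (homogeneousComponent d f) = 0 := h
    change pzmk k (homogeneousComponent d f) ∈ _
    rw [h']; exact Submodule.zero_mem _
  · exact Submodule.mem_iSup_of_mem (⟨d, by omega⟩ : Fin 5) h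

/-- the Lefschetz form -/
noncomputable def pzl (k : Type*) [Field k] : MvPolynomial (Fin 6) k := X 0 + X 3 + X 4

lemma pzl_mem (k : Type*) [Field k] : pzl k ∈ homogeneousSubmodule (Fin 6) k 1 :=
  Submodule.add_mem _ (Submodule.add_mem _ (pz_X_mem 0) (pz_X_mem 3)) (pz_X_mem 4)

/-- Hessian -/
def pzH (i j : Fin 6) : ℕ :=
  pzW 0 0 i j + pzW 3 3 i j + pzW 4 4 i j + 2 * pzW 0 3 i j + 2 * pzW 0 4 i j + 2 * pzW 3 4 i j

lemma pzL_hess {k : Type*} [Field k] (i j : Fin 6) :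
    pzL k (pzl k ^ 2 * (X i * X j)) = (pzH i j : k) := by
  have : pzl k ^ 2 * (X i * X j) = X 0 * X 0 * X i * X j + X 3 * X 3 * X i * X j
      + X 4 * X 4 * X i * X j + (2 : k) • (X 0 * X 3 * X i * X j)
      + (2 : k) • (X 0 * X 4 * X i * X j) + (2 : k) • (X 3 * X 4 * X i * X j) := by
    simp only [pzl, smul_eq_C_mul, map_ofNat]
    ring
  rw [this]
  simp only [map_add, map_smul, pzL_XXXX, pzH, smul_eq_mul]
  push_cast
  rfl

lemma pzH_eq : ∀ i j, pzH i j = (![![2, 1, 0, 2, 2, 1], ![1, 0, 0, 0, 2, 2], ![0, 0, 0, 0, 0, 1],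
    ![2, 0, 0, 0, 1, 2], ![2, 2, 0, 1, 0, 0], ![1, 2, 1, 2, 0, 0]] : Fin 6 → Fin 6 → ℕ) i j := by
  decide +kernel

lemma pz_l4 {k : Type*} [Field k] : pzL k (pzl k ^ 4) = 12 := by
  have : pzl k ^ 4 = ∑ i ∈ ({0, 3, 4} : Finset (Fin 6)), ∑ j ∈ ({0, 3, 4} : Finset (Fin 6)),
      pzl k ^ 2 * (X i * X j) := by
    simp [pzl]
    ring
  rw [this]
  simp only [map_sum, pzL_hess, pzH_eq]
  rw [← Nat.cast_ofNat (n := 12)]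
  simp only [← Nat.cast_sum]
  congr 1

lemma pz_l2 {k : Type*} [Field k] [CharZero k] (f : MvPolynomial (Fin 6) k)
    (hf : f ∈ homogeneousSubmodule (Fin 6) k 1) (h : pzmk k (pzl k ^ 2 * f) = 0) : f = 0 := by
  obtain ⟨c, rfl⟩ := pz_deg1 f hf
  rw [pzmk_zero] at h
  have h2 : ∀ j, ∑ i, c i * (pzH i j : k) = 0 := by
    intro j
    rw [← h (X j), Finset.mul_sum, Finset.sum_mul, map_sum]
    refine Finset.sum_congr rfl fun i _ => ?_
    rw [mul_smul_comm, smul_mul_assoc, map_smul, mul_assoc, pzL_hess, smul_eq_mul]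
  have e0 := h2 0
  have e1 := h2 1
  have e2 := h2 2
  have e3 := h2 3
  have e4 := h2 4
  have e5 := h2 5
  simp [Fin.sum_univ_six, pzH_eq] at e0 e1 e2 e3 e4 e5
  have hc : ∀ i, c i = 0 := by
    have c5 : c 5 = 0 := e2
    have c0 : c 0 = 0 := by grind
    have c4 : c 4 = 0 := by grind
    have c1 : c 1 = 0 := by grind
    have c3 : c 3 = 0 := by grind
    have c2 : c 2 = 0 := by grind
    intro i
    fin_cases i <;> assumption
  simp [hc]

lemma pz_map_comp (k : Type*) [Field k] (ℓ : PzC k) (p : Submodule k (PzC k)) (m n : ℕ) :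
    p.map (LinearMap.mulLeft k (ℓ ^ (m + n))) =
      (p.map (LinearMap.mulLeft k (ℓ ^ m))).map (LinearMap.mulLeft k (ℓ ^ n)) := by
  rw [← Submodule.map_comp, add_comm m n, pow_add, LinearMap.mulLeft_mul]

lemma pz_main (k : Type*) [Field k] [CharZero k] :
    (∀ i m : ℕ, (perazzoCGrade k i).map (LinearMap.mulLeft k (pzmk k (pzl k) ^ m)) ≤
        perazzoCGrade k (i + m)) ∧
    (∀ i m : ℕ,
        Module.finrank k ((perazzoCGrade k i).map (LinearMap.mulLeft k (pzmk k (pzl k) ^ m))) =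
          min (Module.finrank k (perazzoCGrade k i))
            (Module.finrank k (perazzoCGrade k (i + m)))) := by
  set ℓ := pzmk k (pzl k) with hℓ
  have := pz_fin k
  have hle : ∀ i m : ℕ, (perazzoCGrade k i).map (LinearMap.mulLeft k (ℓ ^ m)) ≤
        perazzoCGrade k (i + m) := by
    rintro i m _ ⟨_, ⟨f, hf, rfl⟩, rfl⟩
    refine ⟨pzl k ^ m * f, ?_, ?_⟩
    · have := (IsHomogeneous.pow (pzl_mem k) m).mul hf
      rw [one_mul, add_comm] at this
      exact this
    · change pzmk k _ = ℓ ^ m * pzmk k f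
      rw [map_mul, map_pow]
  refine ⟨hle, ?_⟩
  have i0 : ∀ m ≤ 4, ∀ x ∈ perazzoCGrade k 0, ℓ ^ m * x = 0 → x = 0 := by
    rintro m hm _ ⟨f, hf, rfl⟩ h
    obtain ⟨r, rfl⟩ := pz_deg0 f hf
    have h' : pzmk k (pzl k ^ 4 * (r • 1)) = 0 := by
      rw [map_mul, map_pow, ← hℓ, show 4 = (4 - m) + m by omega, pow_add, mul_assoc]
      erw [h]
      rw [mul_zero]
    have h2 := (pzmk_zero _).1 h' 1
    rw [mul_one, mul_smul_comm, mul_one, map_smul, pz_l4, smul_eq_mul] at h2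
    have hr : r = 0 := by simpa using h2
    rw [hr, zero_smul, map_zero]
  have i1 : ∀ m ≤ 2, ∀ x ∈ perazzoCGrade k 1, ℓ ^ m * x = 0 → x = 0 := by
    rintro m hm _ ⟨f, hf, rfl⟩ h
    have h' : pzmk k (pzl k ^ 2 * f) = 0 := by
      rw [map_mul, map_pow, ← hℓ, show 2 = (2 - m) + m by omega, pow_add, mul_assoc]
      erw [h]
      rw [mul_zero]
    rw [pz_l2 f hf h', map_zero]
  have r0 : ∀ m ≤ 4, Module.finrank k ((perazzoCGrade k 0).map (LinearMap.mulLeft k (ℓ ^ m))) = 1 :=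
    fun m hm => (pz_finrank_map_inj _ _ (i0 m hm)).trans (pz_dim0 k)
  have r1 : ∀ m ≤ 2, Module.finrank k ((perazzoCGrade k 1).map (LinearMap.mulLeft k (ℓ ^ m))) = 6 :=
    fun m hm => (pz_finrank_map_inj _ _ (i1 m hm)).trans (pz_dim1 k)
  -- surjectivity from a composite
  have sur : ∀ a i m, Module.finrank k ((perazzoCGrade k a).map (LinearMap.mulLeft k (ℓ ^ (i + m))))
      = Module.finrank k (perazzoCGrade k (a + i + m)) →
      Module.finrank k ((perazzoCGrade k (a + i)).map (LinearMap.mulLeft k (ℓ ^ m))) =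
        Module.finrank k (perazzoCGrade k (a + i + m)) := by
    intro a i m h
    refine le_antisymm (Submodule.finrank_mono (hle _ _)) ?_
    rw [← h, pz_map_comp]
    exact Submodule.finrank_mono (Submodule.map_mono (hle _ _))
  have s4 : ∀ i ≤ 4, Module.finrank k ((perazzoCGrade k i).map
      (LinearMap.mulLeft k (ℓ ^ (4 - i)))) = 1 := by
    intro i hi
    have := sur 0 i (4 - i) (by
      rw [show i + (4 - i) = 4 by omega, show 0 + i + (4 - i) = 4 by omega, r0 4 le_rfl, pz_dim4])
    rw [show 0 + i + (4 - i) = 4 by omega, pz_dim4, zero_add] at this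
    exact this
  have s2 : Module.finrank k ((perazzoCGrade k 2).map (LinearMap.mulLeft k (ℓ ^ 1))) = 6 := by
    have := sur 1 1 1 (by
      show Module.finrank k ((perazzoCGrade k 1).map (LinearMap.mulLeft k (ℓ ^ 2))) = 
        Module.finrank k (perazzoCGrade k 3)
      rw [r1 2 le_rfl, pz_dim3])
    exact this.trans (pz_dim3 k)
  have d0 := pz_dim0 k
  have d1 := pz_dim1 k
  have d2 := pz_dim2 k
  have d3 := pz_dim3 k
  have d4 := pz_dim4 k
  intro i m
  by_cases him : 4 < i + m
  · have hb := hle i m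
    rw [pz_bot k _ him, le_bot_iff] at hb
    rw [hb, pz_bot k _ him, finrank_bot, Nat.min_zero]
  · rcases Nat.eq_zero_or_pos m with rfl | hm
    · rw [pow_zero, LinearMap.mulLeft_one, Submodule.map_id, add_zero, min_self]
    · have hi : i < 4 := by omega
      have hm4 : m ≤ 4 := by omega
      interval_cases i
      · rw [r0 m hm4, d0]
        interval_cases m <;> simp [d1, d2, d3, d4]
      · interval_cases m
        · rw [r1 1 (by omega), d1]; simp [d2]
        · rw [r1 2 (by omega), d1]; simp [d3]
        · rw [s4 1 (by omega), d1]; simp [d4]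
        · omega
      · interval_cases m
        · rw [s2, d2]; simp [d3]
        · rw [s4 2 (by omega), d2]; simp [d4]
        · omega
        · omega
      · interval_cases m
        · rw [s4 3 (by omega), d3]; simp [d4]
        · omega
        · omega
        · omega

lemma pz_jordan (k : Type*) [Field k] [CharZero k] (n : ℕ) :
    Module.finrank k (LinearMap.ker ((LinearMap.mulLeft k (pzmk k (pzl k))) ^ n)) =
          min n 5 + 5 * min n 3 + 4 * min n 1 := by
  obtain ⟨hle, hr⟩ := pz_main k
  have := pz_fin k
  have hfin : Module.Finite k (PzC k) := by
    rw [Module.finite_def, ← pz_top k]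
    exact Submodule.fg_iSup _ fun i => Module.Finite.iff_fg.1 (pz_fin k i)
  have d0 := pz_dim0 k
  have d1 := pz_dim1 k
  have d2 := pz_dim2 k
  have d3 := pz_dim3 k
  have d4 := pz_dim4 k
  have d5 : ∀ d, 4 < d → Module.finrank k (perazzoCGrade k d) = 0 := fun d hd => by
    rw [pz_bot k d hd, finrank_bot]
  have hinj : Function.Injective (fun i : Fin 5 => (i : ℕ)) := Fin.val_injective
  have htot : Module.finrank k (PzC k) = 24 := by
    rw [← finrank_top, ← pz_top k, pz_finrank_iSup (fun i : Fin 5 => perazzoCGrade k i) ((pz_indep k).comp hinj), Fin.sum_univ_five]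
    change Module.finrank k (perazzoCGrade k 0) + Module.finrank k (perazzoCGrade k 1) +
      Module.finrank k (perazzoCGrade k 2) + Module.finrank k (perazzoCGrade k 3) +
      Module.finrank k (perazzoCGrade k 4) = 24
    omega
  have hrn := LinearMap.finrank_range_add_finrank_ker ((LinearMap.mulLeft k (pzmk k (pzl k))) ^ n)
  rw [htot, LinearMap.pow_mulLeft] at hrn
  rw [LinearMap.pow_mulLeft]
  have hrange : Module.finrank k (LinearMap.range (LinearMap.mulLeft k (pzmk k (pzl k) ^ n))) =
      ∑ i : Fin 5, min (Module.finrank k (perazzoCGrade k i))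
            (Module.finrank k (perazzoCGrade k (i + n))) := by
    rw [LinearMap.range_eq_map, ← pz_top k, Submodule.map_iSup, pz_finrank_iSup]
    · exact Finset.sum_congr rfl fun i _ => hr i n
    · have h1 : iSupIndep (fun i : Fin 5 => perazzoCGrade k (i + n)) :=
        (pz_indep k).comp (f := fun i : Fin 5 => (i : ℕ) + n) (fun a b h => by
          apply hinj; simpa using h)
      exact h1.mono fun i => hle i n
  rw [hrange, Fin.sum_univ_five] at hrn
  change min (Module.finrank k (perazzoCGrade k 0)) (Module.finrank k (perazzoCGrade k (0 + n))) +
    min (Module.finrank k (perazzoCGrade k 1)) (Module.finrank k (perazzoCGrade k (1 + n))) +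
    min (Module.finrank k (perazzoCGrade k 2)) (Module.finrank k (perazzoCGrade k (2 + n))) +
    min (Module.finrank k (perazzoCGrade k 3)) (Module.finrank k (perazzoCGrade k (3 + n))) +
    min (Module.finrank k (perazzoCGrade k 4)) (Module.finrank k (perazzoCGrade k (4 + n))) + _
      = 24 at hrn
  by_cases hn : 4 < n
  · rw [d5 (0 + n) (by omega), d5 (1 + n) (by omega), d5 (2 + n) (by omega), d5 (3 + n) (by omega),
      d5 (4 + n) (by omega)] at hrn
    omega
  · have e5 := d5 5 (by omega)
    have e6 := d5 6 (by omega)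
    have e7 := d5 7 (by omega)
    have e8 := d5 8 (by omega)
    interval_cases n <;> norm_num only [d0, d1, d2, d3, d4, e5, e6, e7, e8] at hrn ⊢ <;> omega

/-- **Example (Example 3.6 / SL2counterex, conclusion).** The standard graded Artinian
Gorenstein algebra `C = k[x,y,z,u,v,t]/Ann(T·(XU²+YUV+ZV²) + X²UV + XYV²)`, with Hilbert
function `(1,6,10,6,1)`, is strong Lefschetz: there is a linear form `ℓ ∈ C₁` all of whose
multiplication maps `×ℓᵐ : Cᵢ → C_{i+m}` have maximal rank, equivalently of Jordan type
`(5,3,3,3,3,3,1,1,1,1)`, the conjugate of the Hilbert function.  (This answers Watanabe's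
question in the standard graded case: `C` is a strong Lefschetz free extension of
`k[t]/(t²)` whose fiber `B` is not strong Lefschetz.) -/
theorem perazzo_free_extension_strong_lefschetz
    (k : Type*) [Field k] [CharZero k] :
    (Module.finrank k (perazzoCGrade k 0) = 1 ∧ Module.finrank k (perazzoCGrade k 1) = 6 ∧
      Module.finrank k (perazzoCGrade k 2) = 10 ∧ Module.finrank k (perazzoCGrade k 3) = 6 ∧
      Module.finrank k (perazzoCGrade k 4) = 1 ∧
      ∀ d : ℕ, 4 < d → Module.finrank k (perazzoCGrade k d) = 0) ∧
    ∃ ℓ ∈ perazzoCGrade k 1,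
      (∀ i m : ℕ,
        Module.finrank k ((perazzoCGrade k i).map (LinearMap.mulLeft k (ℓ ^ m))) =
          min (Module.finrank k (perazzoCGrade k i))
            (Module.finrank k (perazzoCGrade k (i + m)))) ∧
      (∀ n : ℕ,
        Module.finrank k (LinearMap.ker ((LinearMap.mulLeft k ℓ) ^ n)) =
          min n 5 + 5 * min n 3 + 4 * min n 1) := by
  have hm := pz_main k
  refine ⟨⟨pz_dim0 k, pz_dim1 k, pz_dim2 k, pz_dim3 k, pz_dim4 k, fun d hd => ?_⟩,
    pzmk k (pzl k), ⟨_, pzl_mem k, rfl⟩, hm.2, pz_jordan k⟩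
  rw [pz_bot k d hd, finrank_bot]
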